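/- Let ε, λ, c > 0 and set λ₀ = (λ+c)/ε. Define K : ℝ² → ℝ by K(x,ξ) = −λ₀·ξ·Φ(λ₀(x²−ξ²)). Then K is smooth and satisfies the kernel equations: ∂ₓₓK(x,ξ) − ∂_ξξ K(x,ξ) = λ₀·K(x,ξ) for all (x,ξ) ∈ ℝ², K(x,0) = 0 for all x, and K(x,x) = −λ₀·x/2 for all x. -/

import Mathlib

/-!
Write `F k z = ∑ z ^ m / (m! (m + k)!)`, so that `Phi z = F 1 (z / 4) / 2`. Termwise
differentiation gives `(F k)' = F (k + 1)`, hence every `F k` is smooth, and comparing coefficients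
gives the Bessel recurrence `F k z = (k + 1) F (k + 1) z + z F (k + 2) z`. The kernel is
`K(x, ξ) = -(a ξ / 2) F 1 w` with `a = (λ + c) / ε` and `w = a (x² - ξ²) / 4`, and the chain rule
yields `K_xx - K_ξξ = -a² ξ F 2 w - (a² ξ / 2) w F 3 w`, which the recurrence for `k = 1`
identifies with `a K`.
-/

open Real

/-- The entire power series `Φ(z) = (1/2)·∑ (z/4)^m/(m!(m+1)!)`;
for `z > 0` one has `Φ(z) = I₁(√z)/√z`. -/
noncomputable def Phi (z : ℝ) : ℝ :=
  (1 / 2) * ∑' m : ℕ, (z / 4) ^ m / (Nat.factorial m * Nat.factorial (m + 1))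

/-- The entire function `∑ z ^ m / (m! (m + k)!)`, equal to `z ^ (-k / 2) I_k (2 √z)` for
`z > 0`. -/
noncomputable def besselSeries (k : ℕ) (z : ℝ) : ℝ :=
  ∑' m : ℕ, z ^ m / (Nat.factorial m * Nat.factorial (m + k))

lemma summable_besselSeries (k : ℕ) (z : ℝ) :
    Summable fun m : ℕ => z ^ m / ((Nat.factorial m : ℝ) * Nat.factorial (m + k)) := by
  refine Summable.of_norm_bounded (Real.summable_pow_div_factorial |z|) fun m => ?_
  have h1 : (0 : ℝ) < Nat.factorial m := by positivity
  have h2 : (1 : ℝ) ≤ Nat.factorial (m + k) := by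
    exact_mod_cast Nat.succ_le_of_lt (Nat.factorial_pos (m + k))
  rw [Real.norm_eq_abs, abs_div, abs_pow, abs_of_pos (by positivity : (0 : ℝ) <
    (Nat.factorial m : ℝ) * Nat.factorial (m + k))]
  gcongr
  nlinarith

/-- The coefficient identity behind `(besselSeries k)' = besselSeries (k + 1)`. -/
lemma besselSeries_deriv_term (k m : ℕ) (z : ℝ) :
    ((m + 1 : ℕ) : ℝ) * z ^ (m + 1 - 1) /
        ((Nat.factorial (m + 1) : ℝ) * Nat.factorial (m + 1 + k))
      = z ^ m / ((Nat.factorial m : ℝ) * Nat.factorial (m + (k + 1))) := by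
  have h1 : (Nat.factorial m : ℝ) ≠ 0 := by positivity
  have h2 : (Nat.factorial (m + (k + 1)) : ℝ) ≠ 0 := by positivity
  have h3 : (m + 1 : ℝ) ≠ 0 := by positivity
  rw [show m + 1 + k = m + (k + 1) by ring, Nat.factorial_succ m]
  push_cast
  field_simp

lemma summable_besselSeries_deriv (k : ℕ) (z : ℝ) :
    Summable fun m : ℕ =>
      (m : ℝ) * z ^ (m - 1) / ((Nat.factorial m : ℝ) * Nat.factorial (m + k)) := by
  rw [← summable_nat_add_iff 1]
  simp_rw [besselSeries_deriv_term]
  exact summable_besselSeries (k + 1) z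

lemma hasDerivAt_besselSeries (k : ℕ) (z : ℝ) :
    HasDerivAt (besselSeries k) (besselSeries (k + 1) z) z := by
  have hz : z ∈ Metric.ball (0 : ℝ) (|z| + 1) := by simp
  have key : HasDerivAt (besselSeries k)
      (∑' m : ℕ, (m : ℝ) * z ^ (m - 1) /
        ((Nat.factorial m : ℝ) * Nat.factorial (m + k))) z := by
    refine hasDerivAt_tsum_of_isPreconnected
      (g := fun (m : ℕ) (y : ℝ) =>
        y ^ m / ((Nat.factorial m : ℝ) * Nat.factorial (m + k)))
      (g' := fun (m : ℕ) (y : ℝ) =>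
        (m : ℝ) * y ^ (m - 1) / ((Nat.factorial m : ℝ) * Nat.factorial (m + k)))
      (summable_besselSeries_deriv k (|z| + 1)) Metric.isOpen_ball
      (convex_ball (0 : ℝ) (|z| + 1)).isPreconnected ?_ ?_ hz (summable_besselSeries k z) hz
    · intro m y _
      exact (hasDerivAt_pow m y).div_const _
    · intro m y hy
      have hy' : |y| ≤ |z| + 1 := by
        simpa using (Metric.mem_ball.1 hy).le
      rw [Real.norm_eq_abs, abs_div, abs_mul, abs_pow, Nat.abs_cast,
        abs_of_pos (by positivity : (0 : ℝ) <
          (Nat.factorial m : ℝ) * Nat.factorial (m + k))]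
      gcongr
  convert key using 1
  -- The `m = 0` term of the differentiated series vanishes.
  rw [(summable_besselSeries_deriv k z).tsum_eq_zero_add]
  simp_rw [besselSeries_deriv_term]
  simp [besselSeries]

lemma contDiff_besselSeries (k : ℕ) : ContDiff ℝ (⊤ : ℕ∞) (besselSeries k) := by
  rw [contDiff_infty]
  intro n
  induction n generalizing k with
  | zero =>
    exact contDiff_zero.2
      (continuous_iff_continuousAt.2 fun z => (hasDerivAt_besselSeries k z).continuousAt)
  | succ n ih =>
    have hd : deriv (besselSeries k) = besselSeries (k + 1) :=
      funext fun z => (hasDerivAt_besselSeries k z).deriv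
    have h := (contDiff_succ_iff_deriv (𝕜 := ℝ) (n := (n : WithTop ℕ∞))
      (f := besselSeries k)).2
      ⟨fun z => (hasDerivAt_besselSeries k z).differentiableAt, by simp, hd ▸ ih (k + 1)⟩
    exact_mod_cast h

/-- The Bessel recurrence, by comparing coefficients. -/
lemma besselSeries_recurrence (k : ℕ) (z : ℝ) :
    besselSeries k z = (k + 1) * besselSeries (k + 1) z + z * besselSeries (k + 2) z := by
  have hs := summable_besselSeries_deriv (k + 1) z
  -- `z F (k + 2) z = z (F (k + 1))' z`, expanded without shifting the index.
  have h2 : besselSeries (k + 2) z = ∑' m : ℕ, (m : ℝ) * z ^ (m - 1) /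
      ((Nat.factorial m : ℝ) * Nat.factorial (m + (k + 1))) := by
    rw [hs.tsum_eq_zero_add]
    simp_rw [besselSeries_deriv_term]
    simp [besselSeries, add_assoc]
  rw [h2]
  unfold besselSeries
  rw [← tsum_mul_left, ← tsum_mul_left,
    ← ((summable_besselSeries (k + 1) z).mul_left _).tsum_add (hs.mul_left _)]
  refine tsum_congr fun m => ?_
  have h1 : (Nat.factorial m : ℝ) ≠ 0 := by positivity
  have h3 : (Nat.factorial (m + k) : ℝ) ≠ 0 := by positivity
  have h4 : (m + k + 1 : ℝ) ≠ 0 := by positivity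
  have h5 : z * ((m : ℝ) * z ^ (m - 1) /
      ((Nat.factorial m : ℝ) * Nat.factorial (m + (k + 1))))
      = (m : ℝ) * z ^ m / ((Nat.factorial m : ℝ) * Nat.factorial (m + (k + 1))) := by
    rcases m with _ | m
    · simp
    · rw [Nat.add_sub_cancel, pow_succ]; ring
  rw [h5, ← add_assoc m k 1, Nat.factorial_succ (m + k)]
  push_cast
  field_simp
  ring

lemma besselSeries_zero (k : ℕ) : besselSeries k 0 = 1 / Nat.factorial k := by
  unfold besselSeries
  rw [tsum_eq_single 0 (fun m hm => by simp [hm])]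
  simp

lemma Phi_eq (z : ℝ) : Phi z = 1 / 2 * besselSeries 1 (z / 4) := rfl

/-- The explicit backstepping kernel `K(x,ξ) = −λ₀·ξ·Φ(λ₀(x²−ξ²))` for the
constant-coefficient 1D reaction-diffusion equation is smooth and satisfies the kernel
equations. -/
theorem stmt4 (ε lam c : ℝ) (hε : 0 < ε) (hlam : 0 < lam) (hc : 0 < c)
    (K : ℝ → ℝ → ℝ)
    (hK : ∀ x ξ, K x ξ = -((lam + c) / ε) * ξ * Phi (((lam + c) / ε) * (x ^ 2 - ξ ^ 2))) :
    ContDiff ℝ (⊤ : ℕ∞) (fun p : ℝ × ℝ => K p.1 p.2) ∧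
    (∀ x ξ : ℝ,
      deriv (deriv (fun x' => K x' ξ)) x - deriv (deriv (fun ξ' => K x ξ')) ξ
        = ((lam + c) / ε) * K x ξ) ∧
    (∀ x : ℝ, K x 0 = 0) ∧
    (∀ x : ℝ, K x x = -((lam + c) / ε) * x / 2) := by
  set a := (lam + c) / ε with ha
  obtain rfl : K = fun x ξ => -(a * ξ / 2) * besselSeries 1 (a * (x ^ 2 - ξ ^ 2) / 4) := by
    funext x ξ
    rw [hK, Phi_eq]
    ring
  have hFx (k : ℕ) (x ξ : ℝ) :
      HasDerivAt (fun x' : ℝ => besselSeries k (a * (x' ^ 2 - ξ ^ 2) / 4))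
        (besselSeries (k + 1) (a * (x ^ 2 - ξ ^ 2) / 4) * (a * x / 2)) x := by
    have hw : HasDerivAt (fun x' : ℝ => a * (x' ^ 2 - ξ ^ 2) / 4) (a * x / 2) x := by
      refine ((((hasDerivAt_pow 2 x).sub_const (ξ ^ 2)).const_mul a).div_const 4).congr_deriv ?_
      norm_num
      ring
    exact (hasDerivAt_besselSeries k _).comp x hw
  have hFξ (k : ℕ) (x ξ : ℝ) :
      HasDerivAt (fun ξ' : ℝ => besselSeries k (a * (x ^ 2 - ξ' ^ 2) / 4))
        (besselSeries (k + 1) (a * (x ^ 2 - ξ ^ 2) / 4) * (-(a * ξ / 2))) ξ := by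
    have hw : HasDerivAt (fun ξ' : ℝ => a * (x ^ 2 - ξ' ^ 2) / 4) (-(a * ξ / 2)) ξ := by
      refine ((((hasDerivAt_pow 2 ξ).const_sub (x ^ 2)).const_mul a).div_const 4).congr_deriv ?_
      norm_num
      ring
    exact (hasDerivAt_besselSeries k _).comp ξ hw
  refine ⟨?_, fun x ξ => ?_, fun x => by simp, fun x => ?_⟩
  · have h := contDiff_besselSeries 1
    have hw : ContDiff ℝ (⊤ : ℕ∞) fun p : ℝ × ℝ => a * (p.1 ^ 2 - p.2 ^ 2) / 4 := by fun_prop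
    have hl : ContDiff ℝ (⊤ : ℕ∞) fun p : ℝ × ℝ => -(a * p.2 / 2) := by fun_prop
    exact hl.mul (h.comp hw)
  · have hx1 : deriv (fun x' : ℝ =>
        -(a * ξ / 2) * besselSeries 1 (a * (x' ^ 2 - ξ ^ 2) / 4))
        = fun x' => -(a * ξ / 2) *
          (besselSeries 2 (a * (x' ^ 2 - ξ ^ 2) / 4) * (a * x' / 2)) :=
      funext fun x' => ((hFx 1 x' ξ).const_mul _).deriv
    have hlin (t : ℝ) : HasDerivAt (fun t' : ℝ => a * t' / 2) (a / 2) t := by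
      simpa using ((hasDerivAt_id t).const_mul a).div_const 2
    have hξ1 : deriv (fun ξ' : ℝ =>
        -(a * ξ' / 2) * besselSeries 1 (a * (x ^ 2 - ξ' ^ 2) / 4))
        = fun ξ' => -(a / 2) * besselSeries 1 (a * (x ^ 2 - ξ' ^ 2) / 4) +
          -(a * ξ' / 2) *
            (besselSeries 2 (a * (x ^ 2 - ξ' ^ 2) / 4) * (-(a * ξ' / 2))) :=
      funext fun ξ' => ((hlin ξ').neg.mul (hFξ 1 x ξ')).deriv
    have hx2 := (((hFx 2 x ξ).mul (hlin x)).const_mul (-(a * ξ / 2))).deriv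
    have hξ2 := (((hFξ 1 x ξ).const_mul (-(a / 2))).add
      ((hlin ξ).neg.mul ((hFξ 2 x ξ).mul (hlin ξ).neg))).deriv
    have hrec := besselSeries_recurrence 1 (a * (x ^ 2 - ξ ^ 2) / 4)
    norm_num at hrec
    rw [hx1, hξ1]
    refine (congrArg₂ (· - ·) hx2 hξ2).trans ?_
    simp only [Pi.neg_apply, Pi.mul_apply, Nat.reduceAdd]
    rw [hrec]
    ring
  · simp only [sub_self, mul_zero, zero_div, besselSeries_zero]
    simp
    ring
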